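/- (Weighted smooth acyclicity constraint used in Appendix E.2: trace(e^{W∘W}) − d = 0 enforces acyclicity of the weighted adjacency matrix.) Let d : ℕ and let W : Matrix (Fin d) (Fin d) ℝ be an arbitrary real matrix. Then trace(Matrix.exp (W ∘ W)) ≥ d, where W ∘ W denotes the entrywise (Hadamard) product of W with itself; and equality trace(Matrix.exp (W ∘ W)) = d holds if and only if the directed graph on Fin d with an edge from i to j iff W i j ≠ 0 has no directed cycle, i.e., the transitive closure Relation.TransGen (fun i j => W i j ≠ 0) is irreflexive. -/

import Mathlib

/-!
The entry `(A ^ k) i j` of a nonnegative matrix `A` is positive exactly when the graph of positive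
entries of `A` has a path of length `k` from `i` to `j`. Hence `tr (A ^ k) ≥ 0`, and the graph is
acyclic exactly when all these traces vanish for `k ≥ 1`. The exponential series gives
`tr (exp A) - tr 1 = ∑_{k ≥ 1} tr (A ^ k) / k!`, and a sum of nonnegative terms vanishes only if
each term does. The positive entries of `W ⊙ W` are those where `W` is nonzero.
-/

open scoped Nat Matrix

theorem transGen_nonempty_hom_iff_exists_length_ne_zero {V : Type*} [Quiver V] {a b : V} :
    Relation.TransGen (fun x y : V => Nonempty (x ⟶ y)) a b ↔
      ∃ p : Quiver.Path a b, p.length ≠ 0 := by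
  constructor
  · intro h
    induction h with
    | single e => exact e.elim fun e => ⟨e.toPath, by simp⟩
    | tail _ e ih =>
      obtain ⟨p, -⟩ := ih
      exact e.elim fun e => ⟨p.cons e, by simp⟩
  · rintro ⟨p, hp⟩
    induction p with
    | nil => simp at hp
    | cons p e ih =>
      by_cases h0 : p.length = 0
      · obtain rfl := p.eq_of_length_zero h0
        exact .single ⟨e⟩
      · exact (ih h0).tail ⟨e⟩

section Nonneg

variable {n R : Type*} [Fintype n] [DecidableEq n]

theorem trace_pow_nonneg [Semiring R] [PartialOrder R] [IsOrderedRing R] {A : Matrix n n R}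
    (hA : ∀ i j, 0 ≤ A i j) (k : ℕ) : 0 ≤ (A ^ k).trace :=
  Finset.sum_nonneg fun i _ => Matrix.pow_apply_nonneg hA k i i

variable [Ring R] [LinearOrder R] [IsOrderedRing R] [PosMulStrictMono R] [Nontrivial R]
  {A : Matrix n n R}

theorem transGen_pos_iff_exists_pow_apply_pos (hA : ∀ i j, 0 ≤ A i j) {i j : n} :
    Relation.TransGen (fun i j => 0 < A i j) i j ↔ ∃ k ≠ 0, 0 < (A ^ k) i j := by
  let : Quiver n := A.toQuiver
  have hom_iff (x y : n) : Nonempty (x ⟶ y) ↔ 0 < A x y :=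
    nonempty_plift.trans nonempty_prop
  simp only [← hom_iff, transGen_nonempty_hom_iff_exists_length_ne_zero,
    Matrix.pow_apply_pos_iff_nonempty_path hA]
  exact ⟨fun ⟨p, hp⟩ => ⟨p.length, hp, ⟨p, rfl⟩⟩, fun ⟨_, hk, ⟨p, hp⟩⟩ => ⟨p, hp ▸ hk⟩⟩

theorem irrefl_transGen_pos_iff_trace_pow_eq_zero (hA : ∀ i j, 0 ≤ A i j) :
    Std.Irrefl (Relation.TransGen fun i j => 0 < A i j) ↔ ∀ k ≠ 0, (A ^ k).trace = 0 := by
  have trace_eq_zero_iff (k : ℕ) : (A ^ k).trace = 0 ↔ ∀ i, ¬0 < (A ^ k) i i := by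
    have diag_nonneg (i : n) : 0 ≤ (A ^ k) i i := Matrix.pow_apply_nonneg hA k i i
    simp only [Matrix.trace, Matrix.diag_apply, Finset.mem_univ, true_imp_iff, not_lt,
      Finset.sum_eq_zero_iff_of_nonneg fun i _ => diag_nonneg i, (diag_nonneg _).ge_iff_eq']
  simp only [irrefl_def, transGen_pos_iff_exists_pow_apply_pos hA, trace_eq_zero_iff]
  exact ⟨fun h k hk i hi => h ⟨k, hk, hi⟩, fun h i ⟨k, hk, hi⟩ => h k hk i hi⟩

end Nonneg

section Exponential

variable {n 𝔸 : Type*} [Fintype n] [DecidableEq n] [NormedRing 𝔸] [CompleteSpace 𝔸]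
  (𝕂 : Type*) [NontriviallyNormedField 𝕂] [CharZero 𝕂] [ContinuousSMul ℚ 𝕂] [NormedAlgebra 𝕂 𝔸]
  (A : Matrix n n 𝔸)

theorem hasSum_trace_exp :
    HasSum (fun k : ℕ => (k !⁻¹ : 𝕂) • (A ^ k).trace) (NormedSpace.exp A).trace := by
  -- The operator norm induces the product uniformity only after unfolding, so completeness is
  -- recorded before the norm becomes an instance.
  have complete : CompleteSpace (Matrix n n 𝔸) := inferInstance
  let : NormedRing (Matrix n n 𝔸) := Matrix.linftyOpNormedRing
  let : NormedAlgebra 𝕂 (Matrix n n 𝔸) := Matrix.linftyOpNormedAlgebra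
  have hexp : HasSum (fun k : ℕ => (k !⁻¹ : 𝕂) • A ^ k) (NormedSpace.exp A) :=
    @NormedSpace.exp_series_hasSum_exp' 𝕂 _ _ _ _ _ _ complete A
  simpa only [Function.comp_def, Matrix.traceAddMonoidHom_apply, Matrix.trace_smul] using
    hexp.map (Matrix.traceAddMonoidHom n 𝔸) continuous_id.matrix_trace

theorem hasSum_trace_exp_sub_card :
    HasSum (fun k : ℕ => ((k + 1)!⁻¹ : 𝕂) • (A ^ (k + 1)).trace)
      ((NormedSpace.exp A).trace - Fintype.card n) := by
  simpa using (hasSum_nat_add_iff' 1).2 (hasSum_trace_exp 𝕂 A)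

end Exponential

theorem hadamard_acyclicity_general {n : Type*} [Fintype n] [DecidableEq n]
    {A : Matrix n n ℝ} (hA : ∀ i j, 0 ≤ A i j) :
    (Fintype.card n : ℝ) ≤ (NormedSpace.exp A).trace ∧
    ((NormedSpace.exp A).trace = Fintype.card n ↔
      Std.Irrefl (Relation.TransGen fun i j => 0 < A i j)) := by
  have hsum := hasSum_trace_exp_sub_card ℝ A
  have terms_nonneg (k : ℕ) : 0 ≤ ((k + 1)!⁻¹ : ℝ) • (A ^ (k + 1)).trace :=
    smul_nonneg (by positivity) (trace_pow_nonneg hA _)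
  refine ⟨sub_nonneg.1 (hsum.nonneg terms_nonneg), ?_⟩
  calc
    (NormedSpace.exp A).trace = Fintype.card n
      ↔ ∀ k : ℕ, ((k + 1)!⁻¹ : ℝ) • (A ^ (k + 1)).trace = 0 := by
        rw [← sub_eq_zero, ← hsum.tsum_eq, ← hsum.summable.hasSum_iff,
          hasSum_zero_iff_of_nonneg terms_nonneg]
        exact funext_iff
    _ ↔ ∀ k ≠ 0, (A ^ k).trace = 0 := by
        simp [Nat.factorial_ne_zero, Nat.forall_ne_zero_iff]
    _ ↔ Std.Irrefl (Relation.TransGen fun i j => 0 < A i j) :=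
        (irrefl_transGen_pos_iff_trace_pow_eq_zero hA).symm

theorem hadamard_acyclicity (d : ℕ) (W : Matrix (Fin d) (Fin d) ℝ) :
    (d : ℝ) ≤ Matrix.trace (NormedSpace.exp (Matrix.hadamard W W)) ∧
    (Matrix.trace (NormedSpace.exp (Matrix.hadamard W W)) = (d : ℝ) ↔
      Irreflexive (Relation.TransGen (fun i j => W i j ≠ 0))) := by
  have h := hadamard_acyclicity_general (A := W ⊙ W) fun i j => mul_self_nonneg (W i j)
  simp only [Matrix.hadamard_apply, mul_self_pos, Fintype.card_fin, irrefl_def] at h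
  exact h
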